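/- In the online Ramsey game with targets red C₄ and blue P₆, consider the position in which the five edges v₁v₂, v₂v₃, v₃v₄, v₄v₅, v₅v₆ of a path on six distinct vertices have been colored blue, blue, blue, red, red respectively (case B4). From this position Builder can force a red copy of C₄ or a blue copy of P₆ within at most 6 additional rounds, so within at most 11 rounds in total. -/

import Mathlib

open SimpleGraph

/-- The set `S` of edges of the infinite complete graph on `ℕ` contains a copy of
the graph `G`: there is an injective map of the vertices of `G` into `ℕ` sending
every edge of `G` into `S`. -/
def HasCopy {V : Type*} (G : SimpleGraph V) (S : Set (Sym2 ℕ)) : Prop :=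
  ∃ f : V → ℕ, Function.Injective f ∧ ∀ a b, G.Adj a b → s(f a, f b) ∈ S

/-- `BuilderWinsIn G H R B r` means: in the online Ramsey game with targets a red copy
of `G` and a blue copy of `H`, from the position in which the edges in `R` have been
colored red and the edges in `B` have been colored blue, Builder has a strategy that
guarantees, against every Painter strategy, that within at most `r` further rounds the
colored edges contain a red copy of `G` or a blue copy of `H`.  (In each round Builder
chooses a previously unchosen non-loop edge of the infinite complete graph on `ℕ`, and
Painter immediately colors it red or blue; so Builder wins within `r + 1` rounds iff he
has already won, or he can choose an edge such that whichever color Painter gives it,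
he can win within `r` further rounds.) -/
def BuilderWinsIn {V W : Type*} (G : SimpleGraph V) (H : SimpleGraph W) :
    Set (Sym2 ℕ) → Set (Sym2 ℕ) → ℕ → Prop
  | R, B, 0 => HasCopy G R ∨ HasCopy H B
  | R, B, (r + 1) => HasCopy G R ∨ HasCopy H B ∨
      ∃ e : Sym2 ℕ, ¬ e.IsDiag ∧ e ∉ R ∧ e ∉ B ∧
        BuilderWinsIn G H (insert e R) B r ∧ BuilderWinsIn G H R (insert e B) r

/-- The online size Ramsey number `ř(G, H)`: the least `t` such that, starting from the
empty position, Builder can force a red copy of `G` or a blue copy of `H` within at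
most `t` rounds. -/
noncomputable def onlineRamsey {V W : Type*} (G : SimpleGraph V) (H : SimpleGraph W) : ℕ :=
  sInf {t | BuilderWinsIn G H ∅ ∅ t}

/-!
Call the ends of the blue path `x` and `y`, and let `y z t` be the red path. The position Builder
aims for is a blue path, one vertex short of the target, whose ends have a common red neighbor `c`:
joining both ends to a fresh vertex `w` then completes the blue path or the red cycle through `c`
and `w`. To get there, Builder plays `zx`. If it is blue, the longer path from `z` to `y` forces
`ty` to be red, and `t` is the common neighbor. If it is red, `z` is the center of a red star with
leaves `x`, `y`, `t`; of `tx` and `ty`, two red edges give a red `C₄`, and a blue one gives a longer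
path whose ends are leaves of the star.
-/

section FromEdgeSet

variable {α : Type*} {S : Set (Sym2 α)}

lemma cycleGraph_four_isContained {G : SimpleGraph α} {a b c d : α} (hab : G.Adj a b)
    (hbc : G.Adj b c) (hcd : G.Adj c d) (hda : G.Adj d a) (hac : a ≠ c) (hbd : b ≠ d) :
    cycleGraph 4 ⊑ G := by
  rw [cycleGraph_isContained_iff (by norm_num)]
  refine ⟨a, .cons hab (.cons hbc (.cons hcd (.cons hda .nil))), ?_, rfl⟩
  simp [Walk.cons_isCycle_iff, hab.ne, hbc.ne, hcd.ne, hda.ne, hab.ne', hda.ne', hac, hbd,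
    hac.symm]

lemma adj_fromEdgeSet_insert {a b : α} (hab : a ≠ b) :
    (fromEdgeSet (insert s(a, b) S)).Adj a b :=
  (fromEdgeSet_adj _).2 ⟨Set.mem_insert _ _, hab⟩

lemma fromEdgeSet_le_insert (e : Sym2 α) : fromEdgeSet S ≤ fromEdgeSet (insert e S) :=
  fromEdgeSet_mono (Set.subset_insert e S)

lemma exists_isPath_cons_fromEdgeSet_insert {x y u : α} {p : (fromEdgeSet S).Walk x y}
    (hp : p.IsPath) (hu : u ∉ p.support) :
    ∃ q : (fromEdgeSet (insert s(u, x) S)).Walk u y,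
      q.IsPath ∧ q.length = p.length + 1 ∧ q.support = u :: p.support := by
  have hux : u ≠ x := fun h => hu (h ▸ p.start_mem_support)
  refine ⟨.cons (adj_fromEdgeSet_insert hux) (p.mapLe (fromEdgeSet_le_insert _)), ?_, ?_, ?_⟩
  · exact (hp.mapLe _).cons (by rwa [Walk.support_mapLe_eq_support])
  · rw [Walk.length_cons, Walk.length_mapLe]
  · rw [Walk.support_cons, Walk.support_mapLe_eq_support]

end FromEdgeSet

lemma hasCopy_iff_isContained_fromEdgeSet {V : Type*} {G : SimpleGraph V} {S : Set (Sym2 ℕ)} :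
    HasCopy G S ↔ G ⊑ fromEdgeSet S := by
  constructor
  · rintro ⟨f, hf, hS⟩
    exact ⟨⟨f, fun {a b} hab => (fromEdgeSet_adj S).2 ⟨hS a b hab, hf.ne hab.ne⟩⟩, hf⟩
  · rintro ⟨f⟩
    exact ⟨f, f.injective, fun a b hab => ((fromEdgeSet_adj S).1 (f.toHom.map_adj hab)).1⟩

lemma hasCopy_cycleGraph_four {S : Set (Sym2 ℕ)} {a b c d : ℕ} (hab : (fromEdgeSet S).Adj a b)
    (hbc : (fromEdgeSet S).Adj b c) (hcd : (fromEdgeSet S).Adj c d)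
    (hda : (fromEdgeSet S).Adj d a) (hac : a ≠ c) (hbd : b ≠ d) : HasCopy (cycleGraph 4) S :=
  hasCopy_iff_isContained_fromEdgeSet.2 (cycleGraph_four_isContained hab hbc hcd hda hac hbd)

namespace BuilderWinsIn

section General

variable {V W : Type*} {G : SimpleGraph V} {H : SimpleGraph W} {R B : Set (Sym2 ℕ)}

lemma of_hasCopy_red (h : HasCopy G R) (r : ℕ) : BuilderWinsIn G H R B r := by
  cases r <;> exact Or.inl h

lemma of_hasCopy_blue (h : HasCopy H B) (r : ℕ) : BuilderWinsIn G H R B r := by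
  cases r with
  | zero => exact Or.inr h
  | succ r => exact Or.inr (Or.inl h)

lemma succ {r : ℕ} (h : BuilderWinsIn G H R B r) : BuilderWinsIn G H R B (r + 1) := by
  induction r generalizing R B with
  | zero => exact h.elim (of_hasCopy_red · 1) (of_hasCopy_blue · 1)
  | succ r ih =>
    obtain h | h | ⟨e, he, heR, heB, hred, hblue⟩ := h
    · exact of_hasCopy_red h _
    · exact of_hasCopy_blue h _
    · exact Or.inr (Or.inr ⟨e, he, heR, heB, ih hred, ih hblue⟩)

lemma monotone_rounds : Monotone (BuilderWinsIn G H R B) :=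
  monotone_nat_of_le_succ fun _ => succ

/- Builder may also name an edge that already has a color: the matching insertion then leaves the
position as it is. -/
lemma of_move {r a b : ℕ} (hab : a ≠ b) (hred : BuilderWinsIn G H (insert s(a, b) R) B r)
    (hblue : BuilderWinsIn G H R (insert s(a, b) B) r) : BuilderWinsIn G H R B (r + 1) := by
  by_cases hR : s(a, b) ∈ R
  · rw [Set.insert_eq_of_mem hR] at hred
    exact hred.succ
  by_cases hB : s(a, b) ∈ B
  · rw [Set.insert_eq_of_mem hB] at hblue
    exact hblue.succ
  exact Or.inr (Or.inr ⟨s(a, b), by simpa using hab, hR, hB, hred, hblue⟩)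

lemma of_forced_red {x y u n r : ℕ} {p : (fromEdgeSet B).Walk x y} (hp : p.IsPath)
    (hn : n = p.length + 2) (hu : u ∉ p.support)
    (hred : BuilderWinsIn G (pathGraph n) (insert s(u, x) R) B r) :
    BuilderWinsIn G (pathGraph n) R B (r + 1) := by
  have hux : u ≠ x := fun h => hu (h ▸ p.start_mem_support)
  refine of_move hux hred (of_hasCopy_blue ?_ r)
  obtain ⟨q, hq, hlen, -⟩ := exists_isPath_cons_fromEdgeSet_insert hp hu
  rw [hasCopy_iff_isContained_fromEdgeSet, show n = q.length + 1 by lia]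
  exact hq.isContained_pathGraph

end General

section CycleFour

variable {R B : Set (Sym2 ℕ)} {x y z t n : ℕ} {p : (fromEdgeSet B).Walk x y}

lemma of_common_red_neighbor (hp : p.IsPath) (hn : n = p.length + 2) (hxy : x ≠ y)
    (hzx : (fromEdgeSet R).Adj z x) (hzy : (fromEdgeSet R).Adj z y) :
    BuilderWinsIn (cycleGraph 4) (pathGraph n) R B 2 := by
  obtain ⟨w, hw⟩ := Infinite.exists_notMem_finset (insert z p.support.toFinset)
  obtain ⟨hwz, hwp⟩ : w ≠ z ∧ w ∉ p.support := by simpa using hw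
  have hwx : w ≠ x := fun h => hwp (h ▸ p.start_mem_support)
  have hwy : w ≠ y := fun h => hwp (h ▸ p.end_mem_support)
  refine of_forced_red hp hn hwp <|
    of_forced_red hp.reverse (by simpa using hn) (by simpa using hwp) <| of_hasCopy_red ?_ 0
  have hle := fromEdgeSet_le_insert (S := R) s(w, x)
  have hle' := fromEdgeSet_le_insert (S := insert s(w, x) R) s(w, y)
  exact hasCopy_cycleGraph_four (hle' (hle hzx)) (hle' (adj_fromEdgeSet_insert hwx).symm)
    (adj_fromEdgeSet_insert hwy) (hle' (hle hzy.symm)) hwz.symm hxy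

lemma of_red_star (hp : p.IsPath) (hn : n = p.length + 3) (hxy : x ≠ y) (ht : t ∉ p.support)
    (hzx : (fromEdgeSet R).Adj z x) (hzy : (fromEdgeSet R).Adj z y)
    (hzt : (fromEdgeSet R).Adj z t) :
    BuilderWinsIn (cycleGraph 4) (pathGraph n) R B 4 := by
  have htx : t ≠ x := fun h => ht (h ▸ p.start_mem_support)
  have hty : t ≠ y := fun h => ht (h ▸ p.end_mem_support)
  have hle := fromEdgeSet_le_insert (S := R) s(t, x)
  have hle' := fromEdgeSet_le_insert (S := insert s(t, x) R) s(t, y)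
  refine of_move htx (of_move hty ?both_red ?ty_blue) ?tx_blue
  case both_red =>
    exact of_hasCopy_red (hasCopy_cycleGraph_four (hle' (hle hzx))
      (hle' (adj_fromEdgeSet_insert htx).symm) (adj_fromEdgeSet_insert hty)
      (hle' (hle hzy.symm)) hzt.ne hxy) _
  case ty_blue =>
    have htp : t ∉ p.reverse.support := by simpa using ht
    obtain ⟨q, hq, hlen, -⟩ := exists_isPath_cons_fromEdgeSet_insert hp.reverse htp
    rw [Walk.length_reverse] at hlen
    exact of_common_red_neighbor hq (by lia) htx (hle hzt) (hle hzx)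
  case tx_blue =>
    obtain ⟨q, hq, hlen, -⟩ := exists_isPath_cons_fromEdgeSet_insert hp ht
    exact (of_common_red_neighbor hq (by lia) hty hzt hzy).succ

end CycleFour

end BuilderWinsIn

open BuilderWinsIn in
theorem builder_wins_case_B4_general {R B : Set (Sym2 ℕ)} {x y z t : ℕ}
    {p : (fromEdgeSet B).Walk x y} (hp : p.IsPath) (hxy : x ≠ y)
    (hyz : (fromEdgeSet R).Adj y z) (hzt : (fromEdgeSet R).Adj z t)
    (hz : z ∉ p.support) (ht : t ∉ p.support) :
    BuilderWinsIn (cycleGraph 4) (pathGraph (p.length + 3)) R B 5 := by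
  have hzx : z ≠ x := fun h => hz (h ▸ p.start_mem_support)
  have hty : t ≠ y := fun h => ht (h ▸ p.end_mem_support)
  refine of_move hzx ?zx_red ?zx_blue
  case zx_red =>
    have hle := fromEdgeSet_le_insert (S := R) s(z, x)
    exact of_red_star hp rfl hxy ht (adj_fromEdgeSet_insert hzx) (hle hyz.symm) (hle hzt)
  case zx_blue =>
    obtain ⟨q, hq, hlen, hsupp⟩ := exists_isPath_cons_fromEdgeSet_insert hp hz
    have htq : t ∉ q.reverse.support := by simp [hsupp, hzt.ne', ht]
    have hle := fromEdgeSet_le_insert (S := R) s(t, y)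
    have hqn : p.length + 3 = q.length + 2 := by lia
    refine (of_forced_red hq.reverse (by simpa using hqn) htq ?_).succ
    exact of_common_red_neighbor hq hqn hyz.ne' (hle hzt.symm) (adj_fromEdgeSet_insert hty)

/-- Case `B4`: in the online Ramsey game with targets red `C₄` and blue `P₆`,
from the position in which the five edges `v₁v₂, v₂v₃, v₃v₄, v₄v₅, v₅v₆` of a path on
six distinct vertices have been colored blue, blue, blue, red, red respectively,
Builder can force a red copy of `C₄` or a blue copy of `P₆` within at most 6 additional
rounds (so within at most 11 rounds in total). -/
theorem builder_wins_case_B4 (v : Fin 6 → ℕ) (hv : Function.Injective v) :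
    BuilderWinsIn (cycleGraph 4) (pathGraph 6)
      {s(v 3, v 4), s(v 4, v 5)}
      {s(v 0, v 1), s(v 1, v 2), s(v 2, v 3)} 6 := by
  let B : Set (Sym2 ℕ) := {s(v 0, v 1), s(v 1, v 2), s(v 2, v 3)}
  have h01 : (fromEdgeSet B).Adj (v 0) (v 1) := by simp [B, hv.eq_iff]
  have h12 : (fromEdgeSet B).Adj (v 1) (v 2) := by simp [B, hv.eq_iff]
  have h23 : (fromEdgeSet B).Adj (v 2) (v 3) := by simp [B, hv.eq_iff]
  refine BuilderWinsIn.monotone_rounds (by norm_num : 5 ≤ 6) <|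
    builder_wins_case_B4_general (p := .cons h01 (.cons h12 (.cons h23 .nil)))
      (z := v 4) (t := v 5) ?_ ?_ ?_ ?_ ?_ ?_ <;> simp [hv.eq_iff]
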